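/- For every ℓ ≥ 1, the number of 321-avoiding alternating (up-down) permutations of length 2ℓ+1 is the Catalan number C_{ℓ+1}. -/

import Mathlib

/-- `w` is an alternating (up-down) permutation: `w 0 < w 1 > w 2 < ⋯`. -/
def UpDown {n : ℕ} (w : Equiv.Perm (Fin n)) : Prop :=
  ∀ i : ℕ, ∀ h : i + 1 < n,
    if i % 2 = 0 then w ⟨i, Nat.lt_of_succ_lt h⟩ < w ⟨i + 1, h⟩
    else w ⟨i + 1, h⟩ < w ⟨i, Nat.lt_of_succ_lt h⟩

/-- `w` is a reverse-alternating (down-up) permutation: `w 0 > w 1 < w 2 > ⋯`. -/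
def DownUp {n : ℕ} (w : Equiv.Perm (Fin n)) : Prop :=
  ∀ i : ℕ, ∀ h : i + 1 < n,
    if i % 2 = 0 then w ⟨i + 1, h⟩ < w ⟨i, Nat.lt_of_succ_lt h⟩
    else w ⟨i, Nat.lt_of_succ_lt h⟩ < w ⟨i + 1, h⟩

/-- The set of occurrences of the pattern 321 in `w`. -/
def occ321 {n : ℕ} (w : Equiv.Perm (Fin n)) : Set (Fin n × Fin n × Fin n) :=
  {t | t.1 < t.2.1 ∧ t.2.1 < t.2.2 ∧ w t.2.2 < w t.2.1 ∧ w t.2.1 < w t.1}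

/-- The set of occurrences of the pattern 123 in `w`. -/
def occ123 {n : ℕ} (w : Equiv.Perm (Fin n)) : Set (Fin n × Fin n × Fin n) :=
  {t | t.1 < t.2.1 ∧ t.2.1 < t.2.2 ∧ w t.1 < w t.2.1 ∧ w t.2.1 < w t.2.2}

/-!
Split the positions of an up-down permutation `w` of length `2l + 1` into the first position
together with the peaks, and the remaining valleys. If `w` avoids 321, the descent from each peak
to the next valley forces `w` to increase along both rows, and conversely two increasing rows leave
no room for a 321 pattern. So `w` amounts to a pair of complementary increasing sequences
`a₀ < ⋯ < aₗ` and `b₀ < ⋯ < bₗ₋₁` of values with `bᵢ < aᵢ₊₁`. Reading the values from left to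
right, with a down step for each `aᵢ` and an up step for each `bᵢ`, these inequalities say that
down steps never lead by more than one. Such words are the Dyck words of semilength `l + 1`
with their first step removed.
-/

open DyckStep Finset

section Counting

variable {α : Type*} [LinearOrder α]

theorem lt_card_filter_lt_iff {m : ℕ} {a : Fin m → α} (ha : StrictMono a) (i : Fin m) (x : α) :
    (i : ℕ) < #{j | a j < x} ↔ a i < x := by
  constructor
  · contrapose!
    intro hx
    have hsub : ({j | a j < x} : Finset (Fin m)) ⊆ Iio i := fun j hj ↦
      mem_Iio.2 (ha.lt_iff_lt.1 ((mem_filter_univ j).1 hj |>.trans_le hx))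
    simpa using card_le_card hsub
  · intro hx
    have hsub : Iic i ⊆ ({j | a j < x} : Finset (Fin m)) := fun j hj ↦
      (mem_filter_univ j).2 ((ha.monotone (mem_Iic.1 hj)).trans_lt hx)
    simpa [Nat.succ_le_iff] using card_le_card hsub

theorem forall_lt_succ_iff_card_filter_lt_le {n : ℕ} {a : Fin (n + 1) → α} {b : Fin n → α}
    (ha : StrictMono a) (hb : StrictMono b) (hab : ∀ i j, a i ≠ b j) :
    (∀ i, b i < a i.succ) ↔ ∀ x, #{i | a i < x} ≤ #{i | b i < x} + 1 := by
  constructor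
  · intro h x
    by_contra! hlt
    have hle : #{i | a i < x} ≤ n + 1 := card_finset_fin_le _
    let j : Fin n := ⟨#{i | b i < x}, by omega⟩
    have hj : b j < x := (h j).trans ((lt_card_filter_lt_iff ha j.succ x).1 hlt)
    exact lt_irrefl _ ((lt_card_filter_lt_iff hb j x).2 hj)
  · intro h i
    by_contra! hle
    have hi := (lt_card_filter_lt_iff ha i.succ (b i)).2 (hle.lt_of_ne (hab _ _))
    rw [Fin.val_succ] at hi
    have hlt : (i : ℕ) < #{j | b j < b i} := by have := h (b i); omega
    exact lt_irrefl _ ((lt_card_filter_lt_iff hb i (b i)).1 hlt)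

theorem count_take_ofFn {β : Type*} [DecidableEq β] {n : ℕ} (c : Fin n → β) (x : β) (k : ℕ) :
    ((List.ofFn c).take k).count x = #{v : Fin n | (v : ℕ) < k ∧ c v = x} := by
  induction n generalizing k with
  | zero => simp
  | succ n ih =>
    cases k with
    | zero => simp
    | succ k =>
      simp [List.ofFn_succ, List.count_cons, Fin.card_filter_univ_succ', ih, add_comm]

end Counting

section Shuffle

theorem strictMono_sum_iff {ι κ α : Type*} [Preorder ι] [Preorder κ] [Preorder α]
    {f : ι ⊕ κ → α} :
    StrictMono f ↔ (StrictMono fun i ↦ f (.inl i)) ∧ StrictMono fun i ↦ f (.inr i) := by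
  refine ⟨fun h ↦ ⟨h.comp Sum.inl_strictMono, h.comp Sum.inr_strictMono⟩, ?_⟩
  rintro ⟨hl, hr⟩ _ _ (hij | hij)
  exacts [hl hij, hr hij]

/-- The word of a partition of `α` into two indexed rows `e ∘ Sum.inl` and `e ∘ Sum.inr`, marking
an element of the first row by `D` and one of the second row by `U`. It is used for strictly
monotone `e`, for the disjoint-sum order on `ι ⊕ κ`: then both rows increase, and the word
determines `e`. -/
def shuffleWord {ι κ α : Type*} (e : ι ⊕ κ ≃ α) (v : α) : DyckStep :=
  Sum.elim (fun _ ↦ D) (fun _ ↦ U) (e.symm v)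

section Rows

variable {ι κ α : Type*} (e : ι ⊕ κ ≃ α)

@[simp]
theorem shuffleWord_inl (i : ι) : shuffleWord e (e (.inl i)) = D := by simp [shuffleWord]

@[simp]
theorem shuffleWord_inr (i : κ) : shuffleWord e (e (.inr i)) = U := by simp [shuffleWord]

variable [Fintype α]

theorem card_filter_shuffleWord_eq_D [Fintype ι] (p : α → Prop) [DecidablePred p] :
    #{v | p v ∧ shuffleWord e v = D} = #{i | p (e (.inl i))} := by
  refine (card_nbij (fun i ↦ e (.inl i)) ?_ (e.injective.comp Sum.inl_injective).injOn ?_).symm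
  · intro i
    simp
  · intro v
    obtain ⟨i | i, rfl⟩ := e.surjective v <;> simp

theorem card_filter_shuffleWord_eq_U [Fintype κ] (p : α → Prop) [DecidablePred p] :
    #{v | p v ∧ shuffleWord e v = U} = #{i | p (e (.inr i))} := by
  refine (card_nbij (fun i ↦ e (.inr i)) ?_ (e.injective.comp Sum.inr_injective).injOn ?_).symm
  · intro i
    simp
  · intro v
    obtain ⟨i | i, rfl⟩ := e.surjective v <;> simp

end Rows

theorem exists_strictMono_shuffleWord_eq {α : Type*} [Fintype α] [LinearOrder α] {m n : ℕ}
    (c : α → DyckStep) (hD : #{v | c v = D} = m) (hU : #{v | c v = U} = n) :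
    ∃ e : Fin m ⊕ Fin n ≃ α, StrictMono e ∧ shuffleWord e = c := by
  have hcompl : (({v | c v = D} : Finset α)ᶜ : Finset α) = ({v | c v = U} : Finset α) := by
    ext v
    cases h : c v <;> simp [h]
  have hU' : #(({v | c v = D} : Finset α)ᶜ) = n := by rw [hcompl, hU]
  refine ⟨finSumEquivOfFinset hD hU', strictMono_sum_iff.2
    ⟨(orderEmbOfFin _ hD).strictMono, (orderEmbOfFin _ hU').strictMono⟩, funext fun v ↦ ?_⟩
  obtain ⟨i | i, rfl⟩ := (finSumEquivOfFinset hD hU').surjective v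
  · have hi := orderEmbOfFin_mem _ hD i
    rw [shuffleWord_inl]
    exact ((mem_filter_univ _).1 hi).symm
  · have hi := hcompl.le (orderEmbOfFin_mem _ hU' i)
    rw [shuffleWord_inr]
    exact ((mem_filter_univ _).1 hi).symm

section Injective

variable {α : Type*} [LinearOrder α] {m n : ℕ} {e : Fin m ⊕ Fin n ≃ α}

theorem apply_inl_lt_iff_lt_card_filter_shuffleWord [Fintype α] (he : StrictMono e)
    (i : Fin m) (x : α) :
    e (.inl i) < x ↔ (i : ℕ) < #{v | v < x ∧ shuffleWord e v = D} := by
  rw [card_filter_shuffleWord_eq_D e (· < x),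
    lt_card_filter_lt_iff (strictMono_sum_iff.1 he).1]

theorem apply_inr_lt_iff_lt_card_filter_shuffleWord [Fintype α] (he : StrictMono e)
    (i : Fin n) (x : α) :
    e (.inr i) < x ↔ (i : ℕ) < #{v | v < x ∧ shuffleWord e v = U} := by
  rw [card_filter_shuffleWord_eq_U e (· < x),
    lt_card_filter_lt_iff (strictMono_sum_iff.1 he).2]

theorem injOn_shuffleWord [Finite α] :
    {e : Fin m ⊕ Fin n ≃ α | StrictMono e}.InjOn shuffleWord := by
  cases nonempty_fintype α
  intro e he e' he' h
  ext (i | i) <;> refine eq_of_forall_gt_iff fun x ↦ ?_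
  · rw [apply_inl_lt_iff_lt_card_filter_shuffleWord he,
      apply_inl_lt_iff_lt_card_filter_shuffleWord he', h]
  · rw [apply_inr_lt_iff_lt_card_filter_shuffleWord he,
      apply_inr_lt_iff_lt_card_filter_shuffleWord he', h]

end Injective

variable {m n N : ℕ}

theorem count_D_take_ofFn_shuffleWord (e : Fin m ⊕ Fin n ≃ Fin N) (k : ℕ) :
    ((List.ofFn (shuffleWord e)).take k).count D = #{i | (e (.inl i) : ℕ) < k} := by
  rw [count_take_ofFn, card_filter_shuffleWord_eq_D e (fun v ↦ (v : ℕ) < k)]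

theorem count_U_take_ofFn_shuffleWord (e : Fin m ⊕ Fin n ≃ Fin N) (k : ℕ) :
    ((List.ofFn (shuffleWord e)).take k).count U = #{i | (e (.inr i) : ℕ) < k} := by
  rw [count_take_ofFn, card_filter_shuffleWord_eq_U e (fun v ↦ (v : ℕ) < k)]

theorem count_D_ofFn_shuffleWord (e : Fin m ⊕ Fin n ≃ Fin N) :
    (List.ofFn (shuffleWord e)).count D = m := by
  simpa [List.take_of_length_le] using count_D_take_ofFn_shuffleWord e N

theorem count_U_ofFn_shuffleWord (e : Fin m ⊕ Fin n ≃ Fin N) :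
    (List.ofFn (shuffleWord e)).count U = n := by
  simpa [List.take_of_length_le] using count_U_take_ofFn_shuffleWord e N

theorem count_D_add_count_U (L : List DyckStep) : L.count D + L.count U = L.length := by
  induction L with
  | nil => simp
  | cons s L ih => cases s <;> simp [← ih] <;> omega

theorem bijOn_ofFn_shuffleWord (hN : m + n = N) :
    Set.BijOn (fun e : Fin m ⊕ Fin n ≃ Fin N ↦ List.ofFn (shuffleWord e)) {e | StrictMono e}
      {L | L.count D = m ∧ L.count U = n} := by
  refine ⟨fun e _ ↦ ⟨count_D_ofFn_shuffleWord e, count_U_ofFn_shuffleWord e⟩,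
    fun e he e' he' h ↦ injOn_shuffleWord he he' (List.ofFn_injective h), ?_⟩
  rintro L ⟨hD, hU⟩
  obtain rfl : L.length = N := by rw [← count_D_add_count_U, hD, hU, hN]
  have hcount (s : DyckStep) : #{v | L.get v = s} = L.count s := by
    simpa using (count_take_ofFn L.get s L.length).symm
  obtain ⟨e, he, hword⟩ := exists_strictMono_shuffleWord_eq L.get
    ((hcount D).trans hD) ((hcount U).trans hU)
  exact ⟨e, he, by simp [hword]⟩

theorem forall_inr_lt_inl_succ_iff_count_take_le {e : Fin (n + 1) ⊕ Fin n ≃ Fin N}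
    (he : StrictMono e) :
    (∀ i, e (.inr i) < e (.inl i.succ)) ↔ ∀ k, ((List.ofFn (shuffleWord e)).take k).count D ≤
      ((List.ofFn (shuffleWord e)).take k).count U + 1 := by
  obtain ⟨ha, hb⟩ := strictMono_sum_iff.1 (Fin.val_strictMono.comp he)
  have hab (i j) : (e (.inl i) : ℕ) ≠ e (.inr j) := by simp [Fin.val_inj]
  simp only [count_D_take_ofFn_shuffleWord, count_U_take_ofFn_shuffleWord]
  exact forall_lt_succ_iff_card_filter_lt_le ha hb hab

end Shuffle

section DyckTail

/-- The Dyck words of semilength `n + 1` with their first step, an up step, removed. -/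
def dyckTails (n : ℕ) : Set (List DyckStep) :=
  {L | (L.count D = n + 1 ∧ L.count U = n) ∧ ∀ k, (L.take k).count D ≤ (L.take k).count U + 1}

theorem cons_U_tail_toList {p : DyckWord} (hp : 0 < p.semilength) :
    U :: p.toList.tail = p.toList := by
  have hne : p.toList ≠ [] := DyckWord.toList_ne_nil.2 (by rintro rfl; simp at hp)
  rw [← p.head_eq_U hne, List.cons_head_tail]

theorem tail_toList_mem_dyckTails {n : ℕ} {p : DyckWord} (hp : p.semilength = n + 1) :
    p.toList.tail ∈ dyckTails n := by
  obtain ⟨L, hL⟩ : ∃ L, p.toList = U :: L := ⟨_, (cons_U_tail_toList (by omega)).symm⟩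
  have hD : p.toList.count D = n + 1 := p.semilength_eq_count_D ▸ hp
  have hU : p.toList.count U = n + 1 := hp
  have hle (k) := p.count_D_le_count_U (k + 1)
  rw [hL] at hD hU ⊢
  simp only [hL] at hle
  exact ⟨⟨by simpa using hD, by simpa using hU⟩, fun k ↦ by simpa using hle k⟩

/-- Removing the first step of a Dyck word, as an equivalence. -/
def dyckTailEquiv (n : ℕ) : {p : DyckWord // p.semilength = n + 1} ≃ dyckTails n where
  toFun p := ⟨p.1.toList.tail, tail_toList_mem_dyckTails p.2⟩
  invFun L := ⟨⟨U :: L.1, by simp [L.2.1], fun k ↦ by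
    cases k with
    | zero => simp
    | succ k => simpa using L.2.2 k⟩, by simp [DyckWord.semilength, L.2.1]⟩
  left_inv p := Subtype.ext <| DyckWord.ext <| cons_U_tail_toList <| by omega
  right_inv _ := rfl

theorem bijOn_ofFn_shuffleWord_dyckTails {n N : ℕ} (hN : n + 1 + n = N) :
    Set.BijOn (fun e : Fin (n + 1) ⊕ Fin n ≃ Fin N ↦ List.ofFn (shuffleWord e))
      {e | StrictMono e ∧ ∀ i, e (.inr i) < e (.inl i.succ)} (dyckTails n) := by
  have h := bijOn_ofFn_shuffleWord hN
  refine ⟨fun e he ↦ ⟨h.mapsTo he.1, (forall_inr_lt_inl_succ_iff_count_take_le he.1).1 he.2⟩,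
    h.injOn.mono fun e he ↦ he.1, ?_⟩
  rintro L ⟨hcount, hle⟩
  obtain ⟨e, he, rfl⟩ := h.surjOn hcount
  exact ⟨e, ⟨he, (forall_inr_lt_inl_succ_iff_count_take_le he).2 hle⟩, rfl⟩

end DyckTail

section UpDown

theorem occ321_eq_empty_iff {n : ℕ} {w : Equiv.Perm (Fin n)} :
    occ321 w = ∅ ↔ ∀ ⦃i j k⦄, i < j → j < k → w k < w j → w i < w j := by
  rw [Set.eq_empty_iff_forall_notMem]
  constructor
  · intro h i j k hij hjk hkj
    have hle : w i ≤ w j := not_lt.1 fun hji ↦ h (i, j, k) ⟨hij, hjk, hkj, hji⟩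
    exact hle.lt_of_ne (w.injective.ne hij.ne)
  · rintro h ⟨i, j, k⟩ ⟨hij, hjk, hkj, hji⟩
    exact hji.asymm (h hij hjk hkj)

theorem occ321_eq_empty_of_strictMono_trans {ι κ : Type*} [LinearOrder ι] [LinearOrder κ] {n : ℕ}
    {r : ι ⊕ κ ≃ Fin n} {w : Equiv.Perm (Fin n)} (hr : StrictMono r)
    (hw : StrictMono (r.trans w)) : occ321 w = ∅ := by
  have hsame {x y : ι ⊕ κ} (hxy : x.isLeft = y.isLeft) (h : r x < r y) : w (r x) < w (r y) := by
    refine hw ?_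
    rcases x with i | i <;> rcases y with j | j
    · exact Sum.inl_lt_inl_iff.2 ((strictMono_sum_iff.1 hr).1.lt_iff_lt.1 h)
    · cases hxy
    · cases hxy
    · exact Sum.inr_lt_inr_iff.2 ((strictMono_sum_iff.1 hr).2.lt_iff_lt.1 h)
  rw [Set.eq_empty_iff_forall_notMem]
  rintro ⟨i, j, k⟩ ⟨hij, hjk, hkj, hji⟩
  obtain ⟨x, rfl⟩ := r.surjective i
  obtain ⟨y, rfl⟩ := r.surjective j
  obtain ⟨z, rfl⟩ := r.surjective k
  have hpigeon : x.isLeft = y.isLeft ∨ y.isLeft = z.isLeft ∨ x.isLeft = z.isLeft := by grind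
  rcases hpigeon with hxy | hyz | hxz
  · exact hji.asymm (hsame hxy hij)
  · exact hkj.asymm (hsame hyz hjk)
  · exact (hkj.trans hji).asymm (hsame hxz (hij.trans hjk))

variable {l : ℕ}

/-- The two rows of positions of a permutation of length `2 * l + 1`: the first row consists of
`0, 1, 3, 5, …`, that is, the first position and the peaks of an up-down permutation; the second of
the remaining valleys `2, 4, 6, …`. -/
noncomputable def rowEquiv (l : ℕ) : Fin (l + 1) ⊕ Fin l ≃ Fin (2 * l + 1) :=
  -- Truncated subtraction makes `0` the first entry of the first row.
  .ofBijective (Sum.elim (fun i ↦ ⟨2 * i - 1, by omega⟩) fun i ↦ ⟨2 * i + 2, by omega⟩) <| by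
    refine (Fintype.bijective_iff_injective_and_card _).2 ⟨?_, ?_⟩
    · rintro (i | i) (j | j) h <;> simp [Fin.ext_iff] at h ⊢ <;> omega
    · simp only [Fintype.card_sum, Fintype.card_fin]
      omega

@[simp]
theorem val_rowEquiv_inl (i : Fin (l + 1)) : (rowEquiv l (.inl i) : ℕ) = 2 * i - 1 := rfl

@[simp]
theorem val_rowEquiv_inr (i : Fin l) : (rowEquiv l (.inr i) : ℕ) = 2 * i + 2 := rfl

theorem strictMono_rowEquiv : StrictMono (rowEquiv l) := by
  refine strictMono_sum_iff.2 ⟨fun i j hij ↦ ?_, fun i j hij ↦ ?_⟩ <;>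
  · rw [Fin.lt_def] at hij ⊢
    simp only [val_rowEquiv_inl, val_rowEquiv_inr]
    omega

variable {w : Equiv.Perm (Fin (2 * l + 1))}

theorem UpDown.rowEquiv_inr_lt_inl_succ (hw : UpDown w) (i : Fin l) :
    w (rowEquiv l (.inr i)) < w (rowEquiv l (.inl i.succ)) := by
  have h := hw (2 * i + 1) (by omega)
  rwa [if_neg (by omega)] at h

theorem strictMono_rowEquiv_trans (hw : occ321 w = ∅)
    (hdesc : ∀ i : Fin l, w (rowEquiv l (.inr i)) < w (rowEquiv l (.inl i.succ))) :
    StrictMono ((rowEquiv l).trans w) := by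
  rw [occ321_eq_empty_iff] at hw
  have hpos (i : Fin l) : rowEquiv l (.inl i.succ) < rowEquiv l (.inr i) := by
    rw [Fin.lt_def, val_rowEquiv_inl, val_rowEquiv_inr, Fin.val_succ]
    omega
  refine strictMono_sum_iff.2 ⟨Fin.strictMono_iff_lt_succ.2 fun i ↦ ?_, fun i j hij ↦ ?_⟩
  · exact hw (strictMono_rowEquiv (Sum.inl_lt_inl_iff.2 i.castSucc_lt_succ)) (hpos i) (hdesc i)
  · have hlt : rowEquiv l (.inr i) < rowEquiv l (.inr j) :=
      strictMono_rowEquiv (Sum.inr_lt_inr_iff.2 hij)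
    by_contra! hle
    have hji : w (rowEquiv l (.inr j)) < w (rowEquiv l (.inr i)) :=
      hle.lt_of_ne (w.injective.ne hlt.ne')
    exact (hdesc i).asymm (hw (hpos i) hlt hji)

theorem upDown_of_strictMono_rowEquiv_trans (hw : StrictMono ((rowEquiv l).trans w))
    (hdesc : ∀ i : Fin l, w (rowEquiv l (.inr i)) < w (rowEquiv l (.inl i.succ))) :
    UpDown w := by
  have hrow (j : Fin l) : w (rowEquiv l (.inl j.castSucc)) < w (rowEquiv l (.inl j.succ)) :=
    hw (Sum.inl_lt_inl_iff.2 j.castSucc_lt_succ)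
  intro i hi
  split_ifs with heven
  · obtain rfl | ⟨j, rfl⟩ : i = 0 ∨ ∃ j, i = 2 * j + 2 := by
      obtain rfl | hpos := i.eq_zero_or_pos
      · exact .inl rfl
      · exact .inr ⟨i / 2 - 1, by omega⟩
    · exact hrow ⟨0, by omega⟩
    · exact (hdesc ⟨j, by omega⟩).trans (hrow ⟨j + 1, by omega⟩)
  · obtain ⟨j, rfl⟩ : ∃ j, i = 2 * j + 1 := ⟨i / 2, by omega⟩
    exact hdesc ⟨j, by omega⟩

theorem upDown_and_occ321_eq_empty_iff :
    UpDown w ∧ occ321 w = ∅ ↔ StrictMono ((rowEquiv l).trans w) ∧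
      ∀ i, (rowEquiv l).trans w (.inr i) < (rowEquiv l).trans w (.inl i.succ) :=
  ⟨fun h ↦ ⟨strictMono_rowEquiv_trans h.2 h.1.rowEquiv_inr_lt_inl_succ,
      h.1.rowEquiv_inr_lt_inl_succ⟩,
    fun h ↦ ⟨upDown_of_strictMono_rowEquiv_trans h.1 h.2,
      occ321_eq_empty_of_strictMono_trans strictMono_rowEquiv h.1⟩⟩

end UpDown

theorem stmt4 (l : ℕ) (hl : 1 ≤ l) :
    Nat.card {w : Equiv.Perm (Fin (2 * l + 1)) // UpDown w ∧ occ321 w = ∅} = catalan (l + 1) := by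
  let toTails : {w : Equiv.Perm (Fin (2 * l + 1)) // UpDown w ∧ occ321 w = ∅} ≃ dyckTails l :=
    (((rowEquiv l).symm.equivCongr (.refl _)).subtypeEquiv
      fun _ ↦ upDown_and_occ321_eq_empty_iff).trans
      (bijOn_ofFn_shuffleWord_dyckTails (by omega)).equiv
  rw [Nat.card_congr (toTails.trans (dyckTailEquiv l).symm), Nat.card_eq_fintype_card,
    DyckWord.card_dyckWord_semilength_eq_catalan]
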